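/- Let α > 0, q > 0, 0 < p < q, and let X be a random variable. Then the following five statements are equivalent: (i) E( |X|^p log|X| ) < ∞; (ii) ∑_{m=1}^∞ ∑_{n=1}^∞ (mn)^{αp−1} P( |X| > (mn)^{α} ) < ∞; (iii) ∑_{m=1}^∞ ∑_{n=1}^∞ 2^{(m+n)αp} P( |X| > 2^{(m+n)α} ) < ∞; (iv) ∑_{m=1}^∞ ∑_{n=1}^∞ (mn)^{α(p−q)−1} E( |X|^q · 1(|X| ≤ (mn)^{α}) ) < ∞; (v) ∑_{m=1}^∞ ∑_{n=1}^∞ 2^{(m+n)α(p−q)} E( |X|^q · 1(|X| ≤ 2^{(m+n)α}) ) < ∞. -/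

import Mathlib

/-!
Each of the four double series is, by Tonelli, the expectation of `F |X|` for an explicit function
`F` on `[0, ∞)`, so it is enough to compare `F y` with `y ^ p log y` pointwise, up to multiplicative
and additive constants; the additive ones are harmless on a probability space
(`integrable_iff_summable`).

Both sides are compared with `(S + 1) 2 ^ (S α p)`, where `2 ^ (S α) ≤ y < 2 ^ ((S + 1) α)`.
The series indexed by `2 ^ (m + n)` collapse along diagonals to `∑ (s + 1) φ s` (`tsum_add_eq`). The
series indexed by `m n` collapse, up to constants, to the same sums: in the block
`2 ^ i ≤ m < 2 ^ (i + 1)`, `2 ^ j ≤ n < 2 ^ (j + 1)` there are `2 ^ (i + j)` points and `m n` is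
`2 ^ (i + j)` up to a factor `4` (`tsum_blocks`, `weight_bounds`). What remains is a geometric sum
with weights `s + 1`: for the tail series it is increasing and cut off above near `S`
(`tailTerm_upper`, `tailTerm_lower`), for the truncated series it is decreasing and cut off below
near `S` (`truncTerm_upper`, `truncTerm_lower`); in each case the term nearest to `S` has the order
of the whole sum. The factor `S + 1`, of order `log y`, is the number of pairs on the diagonal.
-/

open MeasureTheory ProbabilityTheory Finset Filter
open scoped NNReal ENNReal

noncomputable section

/-- `rlog x` is the natural logarithm of `max x 2`. -/
def rlog (x : ℝ) : ℝ := Real.log (max x 2)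

/-- `itlog k x` is the `k`-fold iterate of `rlog` applied to `x`. -/
def itlog : ℕ → ℝ → ℝ
  | 0, x => x
  | k + 1, x => rlog (itlog k x)

/-- `logNu2 ν x = (log x)(log log x) ⋯ (log ⋯ log x)²`, the product of the first `ν`
iterated logarithms of `x`, with the last (`ν`-fold iterated) factor squared. -/
def logNu2 (ν : ℕ) (x : ℝ) : ℝ := (∏ k ∈ Finset.Icc 1 ν, itlog k x) * itlog ν x

/-- The maximum of the (nonnegative) values `g i j` over `1 ≤ i ≤ M`, `1 ≤ j ≤ N`. -/
def maxNN (M N : ℕ) (g : ℕ → ℕ → ℝ) : ℝ :=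
  (((Finset.Icc 1 M ×ˢ Finset.Icc 1 N).sup fun p => Real.toNNReal (g p.1 p.2) : ℝ≥0) : ℝ)

/-- `maxDS f m n = max_{1 ≤ u ≤ m, 1 ≤ v ≤ n} |∑_{i=1}^{u} ∑_{j=1}^{v} f i j|`. -/
def maxDS (f : ℕ → ℕ → ℝ) (m n : ℕ) : ℝ :=
  maxNN m n fun u v => |∑ i ∈ Finset.Icc 1 u, ∑ j ∈ Finset.Icc 1 v, f i j|

/-- Index set of a doubly-indexed array: pairs of indices that are both at least `1`. -/
abbrev PIdx : Type := {k : ℕ × ℕ // 1 ≤ k.1 ∧ 1 ≤ k.2}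

/-- Condition (H_{2q}) with a given constant `C`: for every finite subfamily and every
family of nondecreasing functions (whose relevant expectations are finite),
`E|∑ (f_λ(X_λ) - E f_λ(X_λ))|^{2q}
   ≤ C (|I| max E|f_λ(X_λ)|^{2q} + |I|^q max (E f_λ(X_λ)²)^q)`. -/
def CondHWith {Ω : Type*} [MeasureSpace Ω] {Λ : Type*} (q C : ℝ) (X : Λ → Ω → ℝ) : Prop :=
  ∀ (I : Finset Λ) (hI : I.Nonempty) (f : Λ → ℝ → ℝ),
    (∀ l ∈ I, Monotone (f l)) →
    (∀ l ∈ I, Integrable fun ω => f l (X l ω)) →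
    (∀ l ∈ I, Integrable fun ω => (f l (X l ω)) ^ 2) →
    (∀ l ∈ I, Integrable fun ω => |f l (X l ω)| ^ (2 * q)) →
    (Integrable fun ω => |∑ l ∈ I, (f l (X l ω) - ∫ ω', f l (X l ω'))| ^ (2 * q)) →
    ∫ ω, |∑ l ∈ I, (f l (X l ω) - ∫ ω', f l (X l ω'))| ^ (2 * q) ≤
      C * ((I.card : ℝ) * I.sup' hI (fun l => ∫ ω, |f l (X l ω)| ^ (2 * q)) +
           (I.card : ℝ) ^ q * I.sup' hI fun l => (∫ ω, (f l (X l ω)) ^ 2) ^ q)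

/-- Condition (H_{2q}): there is a finite constant for which `CondHWith` holds. -/
def CondH {Ω : Type*} [MeasureSpace Ω] {Λ : Type*} (q : ℝ) (X : Λ → Ω → ℝ) : Prop :=
  ∃ C : ℝ, CondHWith q C X

/-- The family `X` is stochastically dominated by the random variable `Y`:
`sup_λ P(|X_λ| > x) ≤ P(|Y| > x)` for every real `x`. -/
def StochDom {Ω : Type*} [MeasureSpace Ω] {Λ : Type*} (X : Λ → Ω → ℝ) (Y : Ω → ℝ) : Prop :=
  ∀ x : ℝ, ∀ l : Λ, volume {ω | x < |X l ω|} ≤ volume {ω | x < |Y ω|}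

/-- Uniform integrability: `sup_λ E(|Y_λ| 1(|Y_λ| > a)) → 0` as `a → ∞`. -/
def UnifInt {Ω : Type*} [MeasureSpace Ω] {Λ : Type*} (Y : Λ → Ω → ℝ) : Prop :=
  (∀ l, Integrable (Y l)) ∧
  ∀ ε : ℝ, 0 < ε → ∃ a : ℝ, ∀ l, ∫ ω, (if a < |Y l ω| then |Y l ω| else 0) ≤ ε

/-- A slowly varying function: positive and measurable on `[0,∞)` with
`L(cx)/L(x) → 1` as `x → ∞` for every `c > 0`. -/
def SlowlyVarying (L : ℝ → ℝ) : Prop :=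
  Measurable L ∧ (∀ x : ℝ, 0 ≤ x → 0 < L x) ∧
  ∀ c : ℝ, 0 < c → Tendsto (fun x => L (c * x) / L x) atTop (nhds 1)

/-- `Lt` is a de Bruijn conjugate of `L`. -/
def DeBruijnConjugate (L Lt : ℝ → ℝ) : Prop :=
  SlowlyVarying Lt ∧
  Tendsto (fun x => L x * Lt (x * L x)) atTop (nhds 1) ∧
  Tendsto (fun x => Lt x * L (x * Lt x)) atTop (nhds 1)

/-- Truncation from above at level `b (2^s)`:
`X_{i,j} 1(X_{i,j} ≤ b_{2^s}) + b_{2^s} 1(X_{i,j} > b_{2^s})`. -/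
def truncUp {Ω : Type*} (X : ℕ → ℕ → Ω → ℝ) (b : ℕ → ℝ) (s i j : ℕ) (ω : Ω) : ℝ :=
  if X i j ω ≤ b (2 ^ s) then X i j ω else b (2 ^ s)

/-- Two-sided truncation at level `b (2^s)`:
`-b_{2^s} 1(X < -b_{2^s}) + X 1(|X| ≤ b_{2^s}) + b_{2^s} 1(X > b_{2^s})`. -/
def truncTwo {Ω : Type*} (X : ℕ → ℕ → Ω → ℝ) (b : ℕ → ℝ) (s i j : ℕ) (ω : Ω) : ℝ :=
  if X i j ω < -b (2 ^ s) then -b (2 ^ s)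
  else if b (2 ^ s) < X i j ω then b (2 ^ s) else X i j ω

/-! ### Regrouping double series -/

/-- The diagonal `m + n = s` of `ℕ × ℕ` has `s + 1` points; these multiplicities are the source of
the logarithm in the moment condition. -/
lemma tsum_add_eq (φ : ℕ → ℝ≥0∞) :
    ∑' k : ℕ × ℕ, φ (k.1 + k.2) = ∑' s : ℕ, ((s : ℝ≥0∞) + 1) * φ s := by
  rw [← (Finset.HasAntidiagonal.sigmaAntidiagonalEquivProd (A := ℕ)).tsum_eq, ENNReal.tsum_sigma']
  refine tsum_congr fun s => ?_
  have : ∀ b : Finset.HasAntidiagonal.antidiagonal s,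
      φ ((Finset.HasAntidiagonal.sigmaAntidiagonalEquivProd ⟨s, b⟩).1 +
        (Finset.HasAntidiagonal.sigmaAntidiagonalEquivProd ⟨s, b⟩).2) = φ s := by
    intro b
    have := Finset.HasAntidiagonal.mem_antidiagonal.1 b.2
    simp [this]
  simp only [this]
  simp

/-- Cauchy condensation with equality: the dyadic block `2 ^ i ≤ m + 1 < 2 ^ (i + 1)` has `2 ^ i`
points. -/
lemma tsum_log (f : ℕ → ℝ≥0∞) :
    ∑' m : ℕ, f (Nat.log 2 (m + 1)) = ∑' i : ℕ, 2 ^ i * f i := by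
  rw [← (Equiv.sigmaFiberEquiv (fun m : ℕ => Nat.log 2 (m + 1))).tsum_eq, ENNReal.tsum_sigma']
  refine tsum_congr fun i => ?_
  have h : ∀ b : {m : ℕ // Nat.log 2 (m + 1) = i},
      f (Nat.log 2 ((Equiv.sigmaFiberEquiv (fun m : ℕ => Nat.log 2 (m + 1)) ⟨i, b⟩) + 1)) = f i := by
    intro b
    simp [b.2]
  simp only [h]
  rw [ENNReal.tsum_const]
  congr 1
  have hs : {m : ℕ | Nat.log 2 (m + 1) = i} = (Finset.Ico (2 ^ i - 1) (2 ^ (i + 1) - 1) : Finset ℕ) := by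
    ext m
    have h1 : 1 ≤ 2 ^ i := Nat.one_le_two_pow
    simp only [Set.mem_ofPred_eq, Finset.coe_Ico, Set.mem_Ico]
    rw [Nat.log_eq_iff (by right; simp)]
    omega
  change ((ENat.card ({m : ℕ | Nat.log 2 (m + 1) = i} : Set ℕ) : ℕ∞) : ℝ≥0∞) = _
  rw [hs]
  simp only [Finset.coe_sort_coe, ENat.card_eq_coe_fintype_card, Fintype.card_coe, Nat.card_Ico]
  have h1 : 1 ≤ 2 ^ i := Nat.one_le_two_pow
  have : 2 ^ (i + 1) - 1 - (2 ^ i - 1) = 2 ^ i := by rw [pow_succ]; omega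
  rw [this]; simp

lemma tsum_log_add (φ : ℕ → ℝ≥0∞) :
    ∑' k : ℕ × ℕ, φ (Nat.log 2 (k.1 + 1) + Nat.log 2 (k.2 + 1)) =
      ∑' s : ℕ, ((s : ℝ≥0∞) + 1) * (2 ^ s * φ s) := by
  rw [← tsum_add_eq, ENNReal.tsum_prod', ENNReal.tsum_prod']
  rw [tsum_log (fun i => ∑' n : ℕ, φ (i + Nat.log 2 (n + 1)))]
  refine tsum_congr fun i => ?_
  rw [tsum_log (fun j => φ (i + j)), ← ENNReal.tsum_mul_left]
  refine tsum_congr fun j => ?_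
  rw [pow_add, mul_assoc]

/-! ### Arithmetic-geometric sums -/

/-- For ratio `b > 1` the sum up to `S` is comparable to its last term. -/
lemma sum_geom_upper (b : ℝ) (hb : 1 < b) (S : ℕ) :
    ∑ s ∈ Finset.range (S + 1), ((s : ℝ) + 1) * b ^ s ≤ b / (b - 1) * (((S : ℝ) + 1) * b ^ S) := by
  have hb' : 0 < b - 1 := by linarith
  induction S with
  | zero => simp; rw [le_div_iff₀ hb']; linarith
  | succ S ih =>
    rw [Finset.sum_range_succ]
    have e : b / (b - 1) * (((S + 1 : ℕ) : ℝ) + 1) * b ^ (S + 1) =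
        (b / (b - 1) + b) * ((S : ℝ) + 2) * b ^ S := by
      push_cast; field_simp; ring
    have h0 : 0 ≤ b / (b - 1) * b ^ S := by positivity
    rw [← mul_assoc, e]
    push_cast
    rw [pow_succ]
    nlinarith

/-- For ratio `c < 1` the tail is comparable to its first term. The cutoff is `S ≤ s + 2` instead of
`S ≤ s` because a dyadic block of products `m n` spans two powers of two. -/
lemma tail_geom_upper (c : ℝ) (hc0 : 0 < c) (hc : c < 1) :
    ∃ K : ℝ≥0∞, K ≠ ⊤ ∧ ∀ S : ℕ,
      ∑' s : ℕ, (if S ≤ s + 2 then ENNReal.ofReal (((s : ℝ) + 1) * c ^ s) else 0) ≤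
        K * ENNReal.ofReal (((S : ℝ) + 1) * c ^ S) := by
  have hs : Summable fun r : ℕ => ((r : ℝ) + 1) * c ^ r := by
    have h1 := summable_pow_mul_geometric_of_norm_lt_one (R := ℝ) 1 (r := c)
      (by rw [Real.norm_eq_abs, abs_of_pos hc0]; exact hc)
    have h2 := summable_geometric_of_lt_one hc0.le hc
    simpa [add_mul] using h1.add h2
  refine ⟨ENNReal.ofReal (c⁻¹ ^ 2) * ∑' r : ℕ, ENNReal.ofReal (((r : ℝ) + 1) * c ^ r),
    ENNReal.mul_ne_top ENNReal.ofReal_ne_top hs.tsum_ofReal_ne_top, fun S => ?_⟩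
  set u : ℕ → ℝ≥0∞ := fun s => if S ≤ s then ENNReal.ofReal (((s : ℝ) + 1) * c ^ s) else 0 with hu
  have h1 : ∀ s : ℕ, (if S ≤ s + 2 then ENNReal.ofReal (((s : ℝ) + 1) * c ^ s) else 0) ≤
      ENNReal.ofReal (c⁻¹ ^ 2) * u (s + 2) := by
    intro s
    simp only [hu]
    split_ifs with h
    · rw [← ENNReal.ofReal_mul (by positivity)]
      apply ENNReal.ofReal_le_ofReal
      push_cast
      have : c⁻¹ ^ 2 * (((s : ℝ) + 2 + 1) * c ^ (s + 2)) = ((s : ℝ) + 2 + 1) * c ^ s := by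
        rw [pow_add]; field_simp
      rw [this]
      gcongr
      linarith
    · simp
  have h2 : ∑' s, u (s + 2) ≤ ∑' s, u s :=
    ENNReal.tsum_comp_le_tsum_of_injective (add_left_injective 2) u
  have h3 : ∑' s, u s = ∑' r, u (r + S) := by
    rw [← ENNReal.summable.sum_add_tsum_nat_add' (k := S) (f := u), Finset.sum_eq_zero, zero_add]
    intro i hi
    simp only [hu]
    rw [if_neg]; simpa using hi
  -- `(S + r) + 1 ≤ (S + 1) (r + 1)` separates the starting index from the offset.
  have h4 : ∑' r, u (r + S) ≤ ∑' r : ℕ, ENNReal.ofReal (((r : ℝ) + 1) * c ^ r) *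
      ENNReal.ofReal (((S : ℝ) + 1) * c ^ S) := by
    refine ENNReal.tsum_le_tsum fun r => ?_
    simp only [hu]
    rw [if_pos (by omega), ← ENNReal.ofReal_mul (by positivity)]
    apply ENNReal.ofReal_le_ofReal
    push_cast
    have : ((r : ℝ) + 1) * c ^ r * (((S : ℝ) + 1) * c ^ S) =
      (((r : ℝ) + 1) * ((S : ℝ) + 1)) * c ^ (r + S) := by ring
    rw [this]
    have : (0 : ℝ) ≤ r * S := by positivity
    gcongr
    nlinarith
  calc _ ≤ ∑' s, ENNReal.ofReal (c⁻¹ ^ 2) * u (s + 2) := ENNReal.tsum_le_tsum h1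
    _ ≤ ENNReal.ofReal (c⁻¹ ^ 2) * (∑' r : ℕ, ENNReal.ofReal (((r : ℝ) + 1) * c ^ r) *
      ENNReal.ofReal (((S : ℝ) + 1) * c ^ S)) := by
        rw [ENNReal.tsum_mul_left]
        refine mul_le_mul' le_rfl ?_
        exact h2.trans (h3.le.trans h4)
    _ = _ := by rw [ENNReal.tsum_mul_right, mul_assoc]

/-! ### From pointwise bounds to integrability -/

/-- If `∑ g k y` and `h y` bound each other up to a factor and an additive constant, then, the total
mass being one, integrating termwise by Tonelli turns integrability of `h |X|` into summability of
the integrals of `g k |X|`. -/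
lemma integrable_iff_summable {Ω : Type*} [MeasureSpace Ω] [IsProbabilityMeasure (volume : Measure Ω)]
    (X : Ω → ℝ) (hX : Measurable X) (h : ℝ → ℝ) (hh : Measurable h) (hh0 : ∀ y, 0 ≤ y → 0 ≤ h y)
    (g : ℕ × ℕ → ℝ → ℝ) (hg : ∀ k, Measurable (g k)) (hg0 : ∀ k y, 0 ≤ y → 0 ≤ g k y)
    (hgb : ∀ k, ∃ M, ∀ y, 0 ≤ y → g k y ≤ M)
    (C : ℝ≥0∞) (hC : C ≠ ⊤)
    (hup : ∀ y, 0 ≤ y → ∑' k, ENNReal.ofReal (g k y) ≤ C * (ENNReal.ofReal (h y) + 1))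
    (hlo : ∀ y, 0 ≤ y → ENNReal.ofReal (h y) ≤ C * (∑' k, ENNReal.ofReal (g k y) + 1)) :
    (Integrable fun ω => h |X ω|) ↔ Summable fun k => ∫ ω, g k |X ω| := by
  have hXa : Measurable fun ω => |X ω| := hX.abs
  have hm : ∀ k, Measurable fun ω => g k |X ω| := fun k => (hg k).comp hXa
  have hint : ∀ k, Integrable fun ω => g k |X ω| := by
    intro k
    obtain ⟨M, hM⟩ := hgb k
    refine Integrable.of_bound (hm k).aestronglyMeasurable M (ae_of_all _ fun ω => ?_)
    rw [Real.norm_of_nonneg (hg0 _ _ (abs_nonneg _))]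
    exact hM _ (abs_nonneg _)
  have hsum : (∫⁻ ω, ∑' k, ENNReal.ofReal (g k |X ω|)) = ∑' k, ENNReal.ofReal (∫ ω, g k |X ω|) := by
    rw [lintegral_tsum fun k => (hm k).ennreal_ofReal.aemeasurable]
    refine tsum_congr fun k => ?_
    rw [ofReal_integral_eq_lintegral_ofReal (hint k)
      (ae_of_all _ fun ω => hg0 _ _ (abs_nonneg _))]
  have hI : (Integrable fun ω => h |X ω|) ↔ (∫⁻ ω, ENNReal.ofReal (h |X ω|)) ≠ ⊤ := by
    have := lintegral_ofReal_ne_top_iff_integrable (μ := (volume : Measure Ω))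
      (f := fun ω => h |X ω|) (hh.comp hXa).aestronglyMeasurable
      (ae_of_all _ fun ω => hh0 _ (abs_nonneg _))
    exact this.symm
  have hS : (Summable fun k => ∫ ω, g k |X ω|) ↔
      (∑' k, ENNReal.ofReal (∫ ω, g k |X ω|)) ≠ ⊤ := by
    refine ⟨fun hs => hs.tsum_ofReal_ne_top, fun hs => ?_⟩
    have := ENNReal.summable_toReal hs
    refine this.congr fun k => ?_
    exact ENNReal.toReal_ofReal (integral_nonneg fun ω => hg0 _ _ (abs_nonneg _))
  rw [hI, hS, ← hsum]
  constructor
  · intro H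
    refine ne_top_of_le_ne_top ?_ (lintegral_mono fun ω => hup |X ω| (abs_nonneg _))
    rw [lintegral_const_mul' _ _ hC, lintegral_add_right _ measurable_const]
    simp only [lintegral_const, measure_univ, mul_one]
    exact ENNReal.mul_ne_top hC (ENNReal.add_ne_top.2 ⟨H, ENNReal.one_ne_top⟩)
  · intro H
    refine ne_top_of_le_ne_top ?_ (lintegral_mono fun ω => hlo |X ω| (abs_nonneg _))
    rw [lintegral_const_mul' _ _ hC, lintegral_add_right _ measurable_const]
    simp only [lintegral_const, measure_univ, mul_one]
    exact ENNReal.mul_ne_top hC (ENNReal.add_ne_top.2 ⟨H, ENNReal.one_ne_top⟩)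

/-! ### Dyadic scales -/

/-- `S` is a dyadic scale of `y`: `2 ^ (S α) ≤ y < 2 ^ ((S + 1) α)`, where the lower bound is waived
at `S = 0` so that every `y ≥ 0` has a scale. -/
def IsScale (α : ℝ) (S : ℕ) (y : ℝ) : Prop :=
  y < 2 ^ (((S : ℝ) + 1) * α) ∧ (S = 0 ∨ (2 : ℝ) ^ ((S : ℝ) * α) ≤ y)

lemma exists_isScale {α : ℝ} (hα : 0 < α) {y : ℝ} (hy : 0 ≤ y) : ∃ S, IsScale α S y := by
  have key : ∀ e : ℕ, ((2 : ℝ) ^ e) ^ α = 2 ^ ((e : ℝ) * α) := fun e => by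
    rw [Real.rpow_mul (by norm_num), Real.rpow_natCast]
  have hyy : (y ^ α⁻¹) ^ α = y := Real.rpow_inv_rpow hy hα.ne'
  have ht : 0 ≤ y ^ α⁻¹ := Real.rpow_nonneg hy _
  rcases lt_or_ge (y ^ α⁻¹) 1 with h | h
  · refine ⟨0, ?_, Or.inl rfl⟩
    have h1 : (y ^ α⁻¹) ^ α < 1 := Real.rpow_lt_one ht h hα
    rw [hyy] at h1
    refine h1.trans_le (Real.one_le_rpow (by norm_num) (by simpa using hα.le))
  · obtain ⟨S, h1, h2⟩ := exists_nat_pow_near h (one_lt_two)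
    refine ⟨S, ?_, Or.inr ?_⟩
    · have := Real.rpow_lt_rpow ht h2 hα
      rw [hyy, key] at this
      simpa using this
    · have := Real.rpow_le_rpow (by positivity) h1 hα.le
      rwa [hyy, key] at this

/-- The size `(S + 1) 2 ^ (S β)` of `y ^ p log y` at scale `S`, when `β = α p`; to it all the series
are compared. -/
def scaleSize (β : ℝ) (S : ℕ) : ℝ≥0∞ := ENNReal.ofReal (((S : ℝ) + 1) * 2 ^ ((S : ℝ) * β))

lemma two_rpow_rpow (a b : ℝ) : ((2 : ℝ) ^ a) ^ b = 2 ^ (a * b) :=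
  (Real.rpow_mul (by norm_num) a b).symm

lemma rlog_pos (y : ℝ) : 0 < rlog y :=
  Real.log_pos (lt_of_lt_of_le (by norm_num) (le_max_right y 2))

lemma moment_le_scaleSize {α p : ℝ} (hα : 0 < α) (hp : 0 < p) :
    ∃ C : ℝ≥0∞, C ≠ ⊤ ∧ ∀ y S, 0 ≤ y → IsScale α S y →
      ENNReal.ofReal (y ^ p * rlog y) ≤ C * scaleSize (α * p) S := by
  refine ⟨ENNReal.ofReal (2 ^ (α * p) * (α + 1)), ENNReal.ofReal_ne_top, ?_⟩
  rintro y S hy ⟨h1, -⟩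
  rw [scaleSize, ← ENNReal.ofReal_mul (by positivity)]
  apply ENNReal.ofReal_le_ofReal
  have hyp : y ^ p ≤ 2 ^ (α * p) * 2 ^ ((S : ℝ) * (α * p)) := by
    have := Real.rpow_le_rpow hy h1.le hp.le
    rw [two_rpow_rpow] at this
    rw [← Real.rpow_add (by norm_num)]
    convert this using 2
    ring
  have hlog : rlog y ≤ (α + 1) * ((S : ℝ) + 1) := by
    have hm : max y 2 ≤ 2 ^ (((S : ℝ) + 1) * α + 1) := by
      rw [Real.rpow_add (by norm_num), Real.rpow_one]
      have : (1 : ℝ) ≤ 2 ^ (((S : ℝ) + 1) * α) :=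
        Real.one_le_rpow (by norm_num) (by positivity)
      apply max_le <;> linarith
    have h2 : rlog y ≤ (((S : ℝ) + 1) * α + 1) * Real.log 2 := by
      rw [← Real.log_rpow (by norm_num)]
      exact Real.log_le_log (lt_of_lt_of_le (by norm_num) (le_max_right y 2)) hm
    have h3 : Real.log 2 ≤ 1 := by linarith [Real.log_two_lt_d9]
    have h4 : (0 : ℝ) ≤ ((S : ℝ) + 1) * α + 1 := by positivity
    nlinarith
  calc y ^ p * rlog y ≤ (2 ^ (α * p) * 2 ^ ((S : ℝ) * (α * p))) * ((α + 1) * ((S : ℝ) + 1)) :=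
        mul_le_mul hyp hlog (rlog_pos y).le (by positivity)
    _ = _ := by ring

lemma scaleSize_le_moment {α p : ℝ} (hα : 0 < α) (hp : 0 < p) :
    ∃ C : ℝ≥0∞, C ≠ ⊤ ∧ ∀ y S, 0 ≤ y → IsScale α S y →
      scaleSize (α * p) S ≤ C * (ENNReal.ofReal (y ^ p * rlog y) + 1) := by
  have hl : 0 < Real.log 2 := Real.log_pos (by norm_num)
  refine ⟨ENNReal.ofReal (2 / (α * Real.log 2) + 1), ENNReal.ofReal_ne_top, ?_⟩
  rintro y S hy ⟨-, h2⟩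
  have hr := rlog_pos y
  rw [scaleSize, ← ENNReal.ofReal_one, ← ENNReal.ofReal_add (by positivity) (by norm_num),
    ← ENNReal.ofReal_mul (by positivity)]
  apply ENNReal.ofReal_le_ofReal
  rcases Nat.eq_zero_or_pos S with rfl | hS
  · have : 0 ≤ 2 / (α * Real.log 2) := by positivity
    have : 0 ≤ y ^ p * rlog y := by positivity
    norm_num
    nlinarith
  · have h2 := h2.resolve_left hS.ne'
    have hyp : 2 ^ ((S : ℝ) * (α * p)) ≤ y ^ p := by
      have := Real.rpow_le_rpow (by positivity) h2 hp.le
      rw [two_rpow_rpow] at this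
      rwa [← mul_assoc]
    have hlog : (S : ℝ) * α * Real.log 2 ≤ rlog y := by
      rw [← Real.log_rpow (by norm_num)]
      exact Real.log_le_log (by positivity) (h2.trans (le_max_left _ _))
    have hS1 : (1 : ℝ) ≤ S := by exact_mod_cast hS
    -- `S + 1 ≤ 2 S` for `S ≥ 1`, which is where the factor `2` in the constant comes from.
    have hS2 : (S : ℝ) + 1 ≤ 2 / (α * Real.log 2) * rlog y := by
      have : (2 : ℝ) * S = 2 / (α * Real.log 2) * ((S : ℝ) * α * Real.log 2) := by field_simp
      calc (S : ℝ) + 1 ≤ 2 * S := by linarith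
        _ = _ := this
        _ ≤ _ := by gcongr
    have h0 : 0 ≤ y ^ p * rlog y := by positivity
    have hk : 0 ≤ 2 / (α * Real.log 2) := by positivity
    calc ((S : ℝ) + 1) * 2 ^ ((S : ℝ) * (α * p))
        ≤ (2 / (α * Real.log 2) * rlog y) * y ^ p := by gcongr
      _ ≤ _ := by nlinarith

/-- Since `y ^ p log y` is comparable to `scaleSize (α p) S` at every `y` of scale `S`, a series only
needs to be compared with `scaleSize (α p) S`. -/
lemma integrable_iff_of_scale {Ω : Type*} [MeasureSpace Ω]
    [IsProbabilityMeasure (volume : Measure Ω)] {α p : ℝ} (hα : 0 < α) (hp : 0 < p)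
    (X : Ω → ℝ) (hX : Measurable X)
    (g : ℕ × ℕ → ℝ → ℝ) (hg : ∀ k, Measurable (g k)) (hg0 : ∀ k y, 0 ≤ y → 0 ≤ g k y)
    (hgb : ∀ k, ∃ M, ∀ y, 0 ≤ y → g k y ≤ M)
    (hup : ∃ C : ℝ≥0∞, C ≠ ⊤ ∧ ∀ y S, 0 ≤ y → IsScale α S y →
      ∑' k, ENNReal.ofReal (g k y) ≤ C * scaleSize (α * p) S)
    (hlo : ∃ C : ℝ≥0∞, C ≠ ⊤ ∧ ∀ y S, 0 ≤ y → IsScale α S y →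
      scaleSize (α * p) S ≤ C * (∑' k, ENNReal.ofReal (g k y) + 1)) :
    (Integrable fun ω => |X ω| ^ p * rlog |X ω|) ↔ Summable fun k => ∫ ω, g k |X ω| := by
  obtain ⟨C₁, hC₁, h₁⟩ := moment_le_scaleSize hα hp
  obtain ⟨C₂, hC₂, h₂⟩ := scaleSize_le_moment hα hp
  obtain ⟨C₃, hC₃, h₃⟩ := hup
  obtain ⟨C₄, hC₄, h₄⟩ := hlo
  refine integrable_iff_summable X hX (fun y => y ^ p * rlog y) ?_ ?_ g hg hg0 hgb
    (C₃ * C₂ + C₁ * C₄) (by finiteness) ?_ ?_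
  · unfold rlog
    fun_prop
  · intro y hy
    have := rlog_pos y
    positivity
  · intro y hy
    obtain ⟨S, hS⟩ := exists_isScale hα hy
    calc _ ≤ C₃ * (C₂ * _) := (h₃ y S hy hS).trans (mul_le_mul' le_rfl (h₂ y S hy hS))
      _ ≤ _ := by rw [← mul_assoc]; exact mul_le_mul' le_self_add le_rfl
  · intro y hy
    obtain ⟨S, hS⟩ := exists_isScale hα hy
    calc _ ≤ C₁ * (C₄ * _) := (h₁ y S hy hS).trans (mul_le_mul' le_rfl (h₄ y S hy hS))
      _ ≤ _ := by rw [← mul_assoc]; exact mul_le_mul' le_add_self le_rfl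

/-! ### The two one-parameter series -/

/-- The weight `2 ^ (s β)` on the event `2 ^ ((s + d) α) < y`; the shift `d` absorbs the width of the
dyadic blocks and the fact that indices start at one. -/
def tailTerm (α β : ℝ) (d : ℕ) (y : ℝ) (s : ℕ) : ℝ≥0∞ :=
  if (2 : ℝ) ^ (((s + d : ℕ) : ℝ) * α) < y then ENNReal.ofReal (2 ^ ((s : ℝ) * β)) else 0

/-- The weight `2 ^ (-s γ) y ^ q` on the event `y ≤ 2 ^ ((s + d) α)`, with `d` as in `tailTerm`. -/
def truncTerm (α γ q : ℝ) (d : ℕ) (y : ℝ) (s : ℕ) : ℝ≥0∞ :=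
  if y ≤ (2 : ℝ) ^ (((s + d : ℕ) : ℝ) * α) then
    ENNReal.ofReal (2 ^ (-((s : ℝ) * γ)) * y ^ q) else 0

lemma two_rpow_natCast_mul (s : ℕ) (b : ℝ) : (2 : ℝ) ^ ((s : ℝ) * b) = (2 ^ b) ^ s := by
  rw [mul_comm, Real.rpow_mul (by norm_num), Real.rpow_natCast]

lemma add_one_mul_ofReal (s : ℕ) (x : ℝ) :
    ((s : ℝ≥0∞) + 1) * ENNReal.ofReal x = ENNReal.ofReal (((s : ℝ) + 1) * x) := by
  rw [ENNReal.ofReal_mul (by positivity), ENNReal.ofReal_add (by positivity) (by norm_num)]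
  simp

/-- At scale `S` only indices `s ≤ S` contribute, and the last one dominates. -/
lemma tailTerm_upper {α β : ℝ} (hα : 0 < α) (hβ : 0 < β) (d : ℕ) :
    ∃ C : ℝ≥0∞, C ≠ ⊤ ∧ ∀ y S, 0 ≤ y → IsScale α S y →
      ∑' s : ℕ, ((s : ℝ≥0∞) + 1) * tailTerm α β d y s ≤ C * scaleSize β S := by
  have hb : (1 : ℝ) < 2 ^ β := Real.one_lt_rpow (by norm_num) hβ
  refine ⟨ENNReal.ofReal (2 ^ β / (2 ^ β - 1)), ENNReal.ofReal_ne_top, ?_⟩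
  rintro y S hy ⟨h1, -⟩
  have hz : ∀ s ∉ Finset.range (S + 1), ((s : ℝ≥0∞) + 1) * tailTerm α β d y s = 0 := by
    intro s hs
    rw [tailTerm, if_neg, mul_zero]
    intro h
    have h3 := (Real.rpow_lt_rpow_left_iff (by norm_num)).1 (h.trans h1)
    have h4 : ((s + d : ℕ) : ℝ) < (S + 1 : ℕ) := by
      push_cast at h3 ⊢; exact lt_of_mul_lt_mul_right h3 hα.le
    have h5 : s + d < S + 1 := by exact_mod_cast h4
    simp at hs
    omega
  rw [tsum_eq_sum hz]
  have hle : ∀ s ∈ Finset.range (S + 1), ((s : ℝ≥0∞) + 1) * tailTerm α β d y s ≤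
      ENNReal.ofReal (((s : ℝ) + 1) * (2 ^ β) ^ s) := by
    intro s _
    rw [tailTerm]
    split_ifs
    · rw [add_one_mul_ofReal, two_rpow_natCast_mul]
    · simp
  refine (Finset.sum_le_sum hle).trans ?_
  rw [← ENNReal.ofReal_sum_of_nonneg (fun s _ => by positivity), scaleSize,
    ← ENNReal.ofReal_mul (div_nonneg (by positivity) (by linarith)), two_rpow_natCast_mul]
  exact ENNReal.ofReal_le_ofReal (sum_geom_upper _ hb S)

/-- The single term `s = S - 3` suffices; at scales below `3` the size is bounded, which the summand
`1` absorbs. -/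
lemma tailTerm_lower {α β : ℝ} (hα : 0 < α) (hβ : 0 < β) :
    ∃ C : ℝ≥0∞, C ≠ ⊤ ∧ ∀ y S, 0 ≤ y → IsScale α S y →
      scaleSize β S ≤ C * (∑' s : ℕ, ((s : ℝ≥0∞) + 1) * tailTerm α β 2 y s + 1) := by
  -- `S + 1 ≤ 4 (S - 2)` for `S ≥ 3`, and `2 ^ (3 β)` is the price of moving from `S` to `S - 3`.
  refine ⟨ENNReal.ofReal (4 * 2 ^ (3 * β)), ENNReal.ofReal_ne_top, ?_⟩
  rintro y S hy ⟨-, h2⟩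
  rcases lt_or_ge S 3 with hS | hS
  · refine le_trans ?_ (mul_le_mul' le_rfl le_add_self)
    rw [mul_one, scaleSize]
    apply ENNReal.ofReal_le_ofReal
    have : (S : ℝ) + 1 ≤ 4 := by
      have : S + 1 ≤ 4 := by omega
      exact_mod_cast this
    have : (S : ℝ) ≤ 3 := by linarith
    gcongr
    norm_num
  · obtain ⟨T, rfl⟩ : ∃ T, S = T + 3 := ⟨S - 3, by omega⟩
    have h2 := h2.resolve_left (by omega)
    refine le_trans ?_ (mul_le_mul' le_rfl (le_self_add.trans' (ENNReal.le_tsum T)))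
    rw [tailTerm, if_pos, add_one_mul_ofReal, scaleSize, ← ENNReal.ofReal_mul (by positivity)]
    · apply ENNReal.ofReal_le_ofReal
      have e : (2 : ℝ) ^ (((T + 3 : ℕ) : ℝ) * β) = 2 ^ (3 * β) * 2 ^ ((T : ℝ) * β) := by
        rw [← Real.rpow_add (by norm_num)]; congr 1; push_cast; ring
      rw [e]
      have : ((T + 3 : ℕ) : ℝ) + 1 ≤ 4 * ((T : ℝ) + 1) := by
        push_cast; linarith [(Nat.cast_nonneg T : (0 : ℝ) ≤ T)]
      calc _ ≤ (4 * ((T : ℝ) + 1)) * (2 ^ (3 * β) * 2 ^ ((T : ℝ) * β)) := by gcongr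
        _ = _ := by ring
    · refine lt_of_lt_of_le ?_ h2
      apply Real.rpow_lt_rpow_of_exponent_lt (by norm_num)
      gcongr
      norm_num

/-- At scale `S` only indices `s ≥ S - 2` contribute, the first one dominates, and
`y ^ q ≤ 2 ^ ((S + 1) α q)` turns `2 ^ (-S γ)` into `2 ^ (S α p)`. -/
lemma truncTerm_upper {α p q : ℝ} (hα : 0 < α) (hq : 0 < q) (hpq : p < q) (d : ℕ)
    (hd : d ≤ 2) :
    ∃ C : ℝ≥0∞, C ≠ ⊤ ∧ ∀ y S, 0 ≤ y → IsScale α S y →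
      ∑' s : ℕ, ((s : ℝ≥0∞) + 1) * truncTerm α (α * (q - p)) q d y s ≤
        C * scaleSize (α * p) S := by
  set γ := α * (q - p) with hγ
  have hγ0 : 0 < γ := mul_pos hα (by linarith)
  have hc : (2 : ℝ) ^ (-γ) < 1 := Real.rpow_lt_one_of_one_lt_of_neg (by norm_num) (by linarith)
  obtain ⟨K, hK, hKS⟩ := tail_geom_upper (2 ^ (-γ)) (by positivity) hc
  refine ⟨K * ENNReal.ofReal (2 ^ (α * q)), by finiteness, ?_⟩
  rintro y S hy ⟨h1, h2⟩
  have hyq : y ^ q ≤ 2 ^ (((S : ℝ) + 1) * α * q) := by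
    rw [← two_rpow_rpow]
    exact Real.rpow_le_rpow hy h1.le hq.le
  have hle : ∀ s : ℕ, ((s : ℝ≥0∞) + 1) * truncTerm α γ q d y s ≤
      (if S ≤ s + 2 then ENNReal.ofReal (((s : ℝ) + 1) * (2 ^ (-γ)) ^ s) else 0) *
        ENNReal.ofReal (2 ^ (((S : ℝ) + 1) * α * q)) := by
    intro s
    rw [truncTerm]
    split_ifs with h h' h'
    · rw [add_one_mul_ofReal, ← ENNReal.ofReal_mul (by positivity), ← two_rpow_natCast_mul,
        mul_neg, mul_assoc ((s : ℝ) + 1)]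
      apply ENNReal.ofReal_le_ofReal
      gcongr
    · exfalso
      have h2 := h2.resolve_left (by omega)
      have h3 := (Real.rpow_le_rpow_left_iff (by norm_num)).1 (h2.trans h)
      have h4 : S ≤ s + d := by exact_mod_cast le_of_mul_le_mul_right h3 hα
      omega
    · simp
    · simp
  refine (ENNReal.tsum_le_tsum hle).trans ?_
  rw [ENNReal.tsum_mul_right]
  refine (mul_le_mul' (hKS S) le_rfl).trans (le_of_eq ?_)
  rw [mul_assoc K, mul_assoc K, scaleSize, ← ENNReal.ofReal_mul (by positivity),
    ← ENNReal.ofReal_mul (by positivity), ← two_rpow_natCast_mul]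
  congr 2
  rw [mul_assoc, ← Real.rpow_add (by norm_num), mul_left_comm, ← Real.rpow_add (by norm_num)]
  congr 2
  rw [hγ]; ring

/-- The single term `s = S + 1` suffices, since `y < 2 ^ ((S + 1) α)` puts it in the truncation
range. -/
lemma truncTerm_lower {α p q : ℝ} (hα : 0 < α) (hq : 0 < q) (hpq : p < q) (d : ℕ) :
    ∃ C : ℝ≥0∞, C ≠ ⊤ ∧ ∀ y S, 0 ≤ y → IsScale α S y →
      scaleSize (α * p) S ≤
        C * (∑' s : ℕ, ((s : ℝ≥0∞) + 1) * truncTerm α (α * (q - p)) q d y s + 1) := by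
  set γ := α * (q - p) with hγ
  have hγ0 : 0 < γ := mul_pos hα (by linarith)
  refine ⟨ENNReal.ofReal (2 ^ γ), ENNReal.ofReal_ne_top, ?_⟩
  rintro y S hy ⟨h1, h2⟩
  rcases Nat.eq_zero_or_pos S with rfl | hS
  · refine le_trans ?_ (mul_le_mul' le_rfl le_add_self)
    rw [mul_one, scaleSize]
    apply ENNReal.ofReal_le_ofReal
    simpa using Real.one_le_rpow (x := 2) (by norm_num) hγ0.le
  · have h2 := h2.resolve_left hS.ne'
    have hyq : 2 ^ ((S : ℝ) * α * q) ≤ y ^ q := by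
      rw [← two_rpow_rpow]
      exact Real.rpow_le_rpow (by positivity) h2 hq.le
    refine le_trans ?_ (mul_le_mul' le_rfl (le_self_add.trans' (ENNReal.le_tsum (S + 1))))
    rw [truncTerm, if_pos, add_one_mul_ofReal, scaleSize, ← ENNReal.ofReal_mul (by positivity)]
    · apply ENNReal.ofReal_le_ofReal
      have e : (2 : ℝ) ^ ((S : ℝ) * (α * p)) =
          2 ^ γ * (2 ^ (-(((S + 1 : ℕ) : ℝ) * γ)) * 2 ^ ((S : ℝ) * α * q)) := by
        rw [← Real.rpow_add (by norm_num), ← Real.rpow_add (by norm_num)]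
        congr 1; rw [hγ]; push_cast; ring
      have hS1 : (S : ℝ) + 1 ≤ ((S + 1 : ℕ) : ℝ) + 1 := by push_cast; linarith
      calc _ ≤ (((S + 1 : ℕ) : ℝ) + 1) *
            (2 ^ γ * (2 ^ (-(((S + 1 : ℕ) : ℝ) * γ)) * y ^ q)) := by rw [e]; gcongr
        _ = _ := by ring
    · refine h1.le.trans ?_
      apply Real.rpow_le_rpow_of_exponent_le (by norm_num)
      refine mul_le_mul_of_nonneg_right ?_ hα.le
      push_cast
      linarith [(Nat.cast_nonneg d : (0 : ℝ) ≤ d)]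

/-! ### Dyadic blocks of products -/

/-- The exponent `i + j` of the dyadic block `2 ^ i ≤ m < 2 ^ (i + 1)`, `2 ^ j ≤ n < 2 ^ (j + 1)`
containing `(m, n) = (k.1 + 1, k.2 + 1)`; the block has `2 ^ (i + j)` points. -/
def blockExp (k : ℕ × ℕ) : ℕ := Nat.log 2 (k.1 + 1) + Nat.log 2 (k.2 + 1)

lemma tsum_blocks (t : ℕ → ℝ≥0∞) :
    ∑' k : ℕ × ℕ, (2 ^ blockExp k : ℝ≥0∞)⁻¹ * t (blockExp k) =
      ∑' s : ℕ, ((s : ℝ≥0∞) + 1) * t s := by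
  unfold blockExp
  rw [tsum_log_add fun s => (2 ^ s : ℝ≥0∞)⁻¹ * t s]
  refine tsum_congr fun s => ?_
  rw [← mul_assoc (2 ^ s), ENNReal.mul_inv_cancel (by positivity) (by finiteness), one_mul]

lemma inv_two_pow_mul_ofReal (s : ℕ) (x : ℝ) :
    (2 ^ s : ℝ≥0∞)⁻¹ * ENNReal.ofReal x = ENNReal.ofReal ((2 ^ s : ℝ)⁻¹ * x) := by
  rw [ENNReal.ofReal_mul (by positivity), ENNReal.ofReal_inv_of_pos (by positivity),
    ENNReal.ofReal_pow (by norm_num)]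
  simp

lemma blockExp_bounds (k : ℕ × ℕ) :
    (2 : ℝ) ^ blockExp k ≤ (((k.1 + 1) * (k.2 + 1) : ℕ) : ℝ) ∧
      (((k.1 + 1) * (k.2 + 1) : ℕ) : ℝ) ≤ 2 ^ (blockExp k + 2) := by
  have h1 := Nat.pow_log_le_self 2 (Nat.succ_ne_zero k.1)
  have h2 := Nat.pow_log_le_self 2 (Nat.succ_ne_zero k.2)
  have h3 := (Nat.lt_pow_succ_log_self (b := 2) (by norm_num) (k.1 + 1)).le
  have h4 := (Nat.lt_pow_succ_log_self (b := 2) (by norm_num) (k.2 + 1)).le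
  constructor
  · have := Nat.mul_le_mul h1 h2
    rw [← pow_add] at this
    exact_mod_cast this
  · have := Nat.mul_le_mul h3 h4
    rw [← pow_add] at this
    rw [blockExp, show ∀ a b : ℕ, a + b + 2 = a.succ + b.succ by omega]
    exact_mod_cast this

lemma blockExp_rpow_bounds (k : ℕ × ℕ) {a : ℝ} (ha : 0 < a) :
    (2 : ℝ) ^ (((blockExp k + 0 : ℕ) : ℝ) * a) ≤ (((k.1 + 1) * (k.2 + 1) : ℕ) : ℝ) ^ a ∧
      (((k.1 + 1) * (k.2 + 1) : ℕ) : ℝ) ^ a ≤ 2 ^ (((blockExp k + 2 : ℕ) : ℝ) * a) := by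
  obtain ⟨h1, h2⟩ := blockExp_bounds k
  constructor
  · rw [Real.rpow_mul (by norm_num), Real.rpow_natCast]
    exact Real.rpow_le_rpow (by positivity) h1 ha.le
  · rw [Real.rpow_mul (by norm_num), Real.rpow_natCast]
    exact Real.rpow_le_rpow (by positivity) h2 ha.le

lemma rpow_le_of_le {x N : ℝ} (hx : 0 < x) (h1 : x ≤ N) (h2 : N ≤ 4 * x) (e : ℝ) :
    N ^ e ≤ 4 ^ |e| * x ^ e ∧ x ^ e ≤ 4 ^ |e| * N ^ e := by
  have hN : 0 < N := hx.trans_le h1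
  have h4 : (1 : ℝ) ≤ 4 ^ |e| := Real.one_le_rpow (by norm_num) (abs_nonneg e)
  rcases le_total 0 e with he | he
  · have i1 := Real.rpow_le_rpow hx.le h1 he
    have i2 := Real.rpow_le_rpow hN.le h2 he
    rw [Real.mul_rpow (by norm_num) hx.le] at i2
    have := Real.rpow_nonneg hN.le e
    rw [abs_of_nonneg he] at *
    exact ⟨i2, by nlinarith⟩
  · have i1 := Real.rpow_le_rpow_of_nonpos hx h1 he
    have i2 := Real.rpow_le_rpow_of_nonpos hN h2 he
    rw [Real.mul_rpow (by norm_num) hx.le] at i2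
    have := Real.rpow_nonneg hx.le e
    rw [abs_of_nonpos he] at *
    refine ⟨by nlinarith, ?_⟩
    rw [Real.rpow_neg (by norm_num)]
    rwa [← div_eq_inv_mul, le_div_iff₀' (by positivity)]

/-- The weight `(m n) ^ (e - 1)` is, up to a constant, the weight `2 ^ (s e)` shared equally among the
`2 ^ s` points of a dyadic block with exponent `s`. -/
lemma weight_bounds (k : ℕ × ℕ) (e : ℝ) :
    (((k.1 + 1) * (k.2 + 1) : ℕ) : ℝ) ^ (e - 1) ≤
      4 ^ |e - 1| * ((2 ^ blockExp k : ℝ)⁻¹ * 2 ^ ((blockExp k : ℝ) * e)) ∧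
    (2 ^ blockExp k : ℝ)⁻¹ * 2 ^ ((blockExp k : ℝ) * e) ≤
      4 ^ |e - 1| * (((k.1 + 1) * (k.2 + 1) : ℕ) : ℝ) ^ (e - 1) := by
  obtain ⟨h1, h2⟩ := blockExp_bounds k
  have he : (2 ^ blockExp k : ℝ)⁻¹ * 2 ^ ((blockExp k : ℝ) * e) =
      (2 ^ blockExp k : ℝ) ^ (e - 1) := by
    rw [Real.rpow_sub_one (by positivity), ← Real.rpow_natCast_mul (by norm_num),
      div_eq_inv_mul]
  rw [he]
  refine rpow_le_of_le (by positivity) h1 (h2.trans (le_of_eq ?_)) _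
  ring

lemma const_exists_upper {α β : ℝ} {g : ℕ × ℕ → ℝ → ℝ} {t : ℝ → ℕ → ℝ≥0∞} (K : ℝ≥0∞) (hK : K ≠ ⊤)
    (h : ∀ y, 0 ≤ y → ∑' k, ENNReal.ofReal (g k y) ≤ K * ∑' s : ℕ, ((s : ℝ≥0∞) + 1) * t y s)
    (ht : ∃ C : ℝ≥0∞, C ≠ ⊤ ∧ ∀ y S, 0 ≤ y → IsScale α S y →
      ∑' s : ℕ, ((s : ℝ≥0∞) + 1) * t y s ≤ C * scaleSize β S) :
    ∃ C : ℝ≥0∞, C ≠ ⊤ ∧ ∀ y S, 0 ≤ y → IsScale α S y →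
      ∑' k, ENNReal.ofReal (g k y) ≤ C * scaleSize β S := by
  obtain ⟨C, hC, hCt⟩ := ht
  refine ⟨K * C, by finiteness, fun y S hy hS => ?_⟩
  rw [mul_assoc]
  exact (h y hy).trans (mul_le_mul' le_rfl (hCt y S hy hS))

lemma const_exists_lower {α β : ℝ} {g : ℕ × ℕ → ℝ → ℝ} {t : ℝ → ℕ → ℝ≥0∞} (K : ℝ≥0∞) (hK : K ≠ ⊤)
    (h : ∀ y, 0 ≤ y → ∑' s : ℕ, ((s : ℝ≥0∞) + 1) * t y s ≤ K * ∑' k, ENNReal.ofReal (g k y))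
    (ht : ∃ C : ℝ≥0∞, C ≠ ⊤ ∧ ∀ y S, 0 ≤ y → IsScale α S y →
      scaleSize β S ≤ C * (∑' s : ℕ, ((s : ℝ≥0∞) + 1) * t y s + 1)) :
    ∃ C : ℝ≥0∞, C ≠ ⊤ ∧ ∀ y S, 0 ≤ y → IsScale α S y →
      scaleSize β S ≤ C * (∑' k, ENNReal.ofReal (g k y) + 1) := by
  obtain ⟨C, hC, hCt⟩ := ht
  refine ⟨C * (K + 1), by finiteness, fun y S hy hS => (hCt y S hy hS).trans ?_⟩
  rw [mul_assoc]
  refine mul_le_mul' le_rfl ((add_le_add_left (h y hy) 1).trans ?_)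
  rw [add_mul, mul_add, one_mul, mul_one]
  refine add_le_add le_self_add le_add_self

/-! ### The four series -/

lemma integrable_iff_summable_tail_mul {Ω : Type*} [MeasureSpace Ω]
    [IsProbabilityMeasure (volume : Measure Ω)] {α p : ℝ} (hα : 0 < α) (hp : 0 < p)
    (X : Ω → ℝ) (hX : Measurable X) :
    (Integrable fun ω => |X ω| ^ p * rlog |X ω|) ↔
      Summable fun k : ℕ × ℕ => ∫ ω,
        if (((k.1 + 1) * (k.2 + 1) : ℕ) : ℝ) ^ α < |X ω| then
          (((k.1 + 1) * (k.2 + 1) : ℕ) : ℝ) ^ (α * p - 1) else 0 := by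
  have hβ : 0 < α * p := mul_pos hα hp
  refine integrable_iff_of_scale hα hp X hX
    (fun k y => if (((k.1 + 1) * (k.2 + 1) : ℕ) : ℝ) ^ α < y then
      (((k.1 + 1) * (k.2 + 1) : ℕ) : ℝ) ^ (α * p - 1) else 0) ?_ ?_ ?_ ?_ ?_
  · exact fun k => Measurable.ite measurableSet_Ioi measurable_const measurable_const
  · intro k y _
    split_ifs <;> positivity
  · refine fun k => ⟨(((k.1 + 1) * (k.2 + 1) : ℕ) : ℝ) ^ (α * p - 1), fun y _ => ?_⟩
    split_ifs
    · exact le_rfl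
    · positivity
  · refine const_exists_upper (ENNReal.ofReal (4 ^ |α * p - 1|)) ENNReal.ofReal_ne_top ?_
      (tailTerm_upper hα hβ 0)
    intro y hy
    rw [← tsum_blocks, ← ENNReal.tsum_mul_left]
    refine ENNReal.tsum_le_tsum fun k => ?_
    split_ifs with h
    · rw [tailTerm, if_pos ((blockExp_rpow_bounds k hα).1.trans_lt h), inv_two_pow_mul_ofReal,
        ← ENNReal.ofReal_mul (by positivity)]
      exact ENNReal.ofReal_le_ofReal (weight_bounds k _).1
    · simp
  · refine const_exists_lower (ENNReal.ofReal (4 ^ |α * p - 1|)) ENNReal.ofReal_ne_top ?_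
      (tailTerm_lower hα hβ)
    intro y hy
    rw [← tsum_blocks, ← ENNReal.tsum_mul_left]
    refine ENNReal.tsum_le_tsum fun k => ?_
    rw [tailTerm]
    split_ifs with h h' h'
    · rw [inv_two_pow_mul_ofReal, ← ENNReal.ofReal_mul (by positivity)]
      exact ENNReal.ofReal_le_ofReal (weight_bounds k _).2
    · exact absurd ((blockExp_rpow_bounds k hα).2.trans_lt h) h'
    · simp
    · simp

lemma integrable_iff_summable_tail_pow {Ω : Type*} [MeasureSpace Ω]
    [IsProbabilityMeasure (volume : Measure Ω)] {α p : ℝ} (hα : 0 < α) (hp : 0 < p)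
    (X : Ω → ℝ) (hX : Measurable X) :
    (Integrable fun ω => |X ω| ^ p * rlog |X ω|) ↔
      Summable fun k : ℕ × ℕ => ∫ ω,
        if (2 : ℝ) ^ ((((k.1 + 1) + (k.2 + 1) : ℕ) : ℝ) * α) < |X ω| then
          (2 : ℝ) ^ ((((k.1 + 1) + (k.2 + 1) : ℕ) : ℝ) * (α * p)) else 0 := by
  have hβ : 0 < α * p := mul_pos hα hp
  have hsum : ∀ y : ℝ, ∑' k : ℕ × ℕ, ENNReal.ofReal
      (if (2 : ℝ) ^ ((((k.1 + 1) + (k.2 + 1) : ℕ) : ℝ) * α) < y then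
          (2 : ℝ) ^ ((((k.1 + 1) + (k.2 + 1) : ℕ) : ℝ) * (α * p)) else 0) =
      ENNReal.ofReal (2 ^ (2 * (α * p))) *
        ∑' s : ℕ, ((s : ℝ≥0∞) + 1) * tailTerm α (α * p) 2 y s := by
    intro y
    rw [← tsum_add_eq, ← ENNReal.tsum_mul_left]
    refine tsum_congr fun k => ?_
    rw [tailTerm, show k.1 + 1 + (k.2 + 1) = k.1 + k.2 + 2 by ring]
    split_ifs
    · rw [← ENNReal.ofReal_mul (by positivity), ← Real.rpow_add (by norm_num)]
      congr 2
      push_cast; ring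
    · simp
  refine integrable_iff_of_scale hα hp X hX
    (fun k y => if (2 : ℝ) ^ ((((k.1 + 1) + (k.2 + 1) : ℕ) : ℝ) * α) < y then
          (2 : ℝ) ^ ((((k.1 + 1) + (k.2 + 1) : ℕ) : ℝ) * (α * p)) else 0) ?_ ?_ ?_ ?_ ?_
  · exact fun k => Measurable.ite measurableSet_Ioi measurable_const measurable_const
  · intro k y _
    split_ifs <;> positivity
  · refine fun k => ⟨(2 : ℝ) ^ ((((k.1 + 1) + (k.2 + 1) : ℕ) : ℝ) * (α * p)), fun y _ => ?_⟩
    split_ifs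
    · exact le_rfl
    · positivity
  · exact const_exists_upper _ ENNReal.ofReal_ne_top (fun y _ => (hsum y).le)
      (tailTerm_upper hα hβ 2)
  · refine const_exists_lower 1 ENNReal.one_ne_top (fun y _ => ?_) (tailTerm_lower hα hβ)
    rw [one_mul, hsum]
    refine le_mul_of_one_le_left' (ENNReal.one_le_ofReal.2 ?_)
    exact Real.one_le_rpow (by norm_num) (by positivity)

lemma integrable_iff_summable_trunc_mul {Ω : Type*} [MeasureSpace Ω]
    [IsProbabilityMeasure (volume : Measure Ω)] {α p q : ℝ} (hα : 0 < α) (hp : 0 < p)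
    (hpq : p < q) (X : Ω → ℝ) (hX : Measurable X) :
    (Integrable fun ω => |X ω| ^ p * rlog |X ω|) ↔
      Summable fun k : ℕ × ℕ => ∫ ω, (((k.1 + 1) * (k.2 + 1) : ℕ) : ℝ) ^ (α * (p - q) - 1) *
        if |X ω| ≤ (((k.1 + 1) * (k.2 + 1) : ℕ) : ℝ) ^ α then |X ω| ^ q else 0 := by
  have hq : 0 < q := hp.trans hpq
  have hexp : ∀ s : ℕ, -((s : ℝ) * (α * (q - p))) = (s : ℝ) * (α * (p - q)) := fun s => by ring
  refine integrable_iff_of_scale hα hp X hX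
    (fun k y => (((k.1 + 1) * (k.2 + 1) : ℕ) : ℝ) ^ (α * (p - q) - 1) *
      if y ≤ (((k.1 + 1) * (k.2 + 1) : ℕ) : ℝ) ^ α then y ^ q else 0) ?_ ?_ ?_ ?_ ?_
  · exact fun k => (Measurable.ite measurableSet_Iic (by fun_prop) measurable_const).const_mul _
  · intro k y _
    split_ifs <;> positivity
  · refine fun k => ⟨(((k.1 + 1) * (k.2 + 1) : ℕ) : ℝ) ^ (α * (p - q) - 1) *
      ((((k.1 + 1) * (k.2 + 1) : ℕ) : ℝ) ^ α) ^ q, fun y hy => ?_⟩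
    gcongr
    split_ifs with h
    · gcongr
    · positivity
  · refine const_exists_upper (ENNReal.ofReal (4 ^ |α * (p - q) - 1|)) ENNReal.ofReal_ne_top ?_
      (truncTerm_upper hα hq hpq 2 le_rfl)
    intro y hy
    rw [← tsum_blocks, ← ENNReal.tsum_mul_left]
    refine ENNReal.tsum_le_tsum fun k => ?_
    split_ifs with h
    · rw [truncTerm, if_pos (h.trans (blockExp_rpow_bounds k hα).2), inv_two_pow_mul_ofReal,
        ← ENNReal.ofReal_mul (by positivity), hexp, ← mul_assoc, ← mul_assoc]
      refine ENNReal.ofReal_le_ofReal (mul_le_mul_of_nonneg_right ?_ (by positivity))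
      rw [mul_assoc]
      exact (weight_bounds k _).1
    · simp
  · refine const_exists_lower (ENNReal.ofReal (4 ^ |α * (p - q) - 1|)) ENNReal.ofReal_ne_top ?_
      (truncTerm_lower hα hq hpq 0)
    intro y hy
    rw [← tsum_blocks, ← ENNReal.tsum_mul_left]
    refine ENNReal.tsum_le_tsum fun k => ?_
    rw [truncTerm]
    split_ifs with h h' h'
    · rw [inv_two_pow_mul_ofReal, ← ENNReal.ofReal_mul (by positivity), hexp,
        ← mul_assoc ((2 : ℝ) ^ blockExp k)⁻¹, ← mul_assoc ((4 : ℝ) ^ |α * (p - q) - 1|)]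
      exact ENNReal.ofReal_le_ofReal
        (mul_le_mul_of_nonneg_right (weight_bounds k _).2 (by positivity))
    · exact absurd (h.trans (blockExp_rpow_bounds k hα).1) h'
    · simp
    · simp

lemma integrable_iff_summable_trunc_pow {Ω : Type*} [MeasureSpace Ω]
    [IsProbabilityMeasure (volume : Measure Ω)] {α p q : ℝ} (hα : 0 < α) (hp : 0 < p)
    (hpq : p < q) (X : Ω → ℝ) (hX : Measurable X) :
    (Integrable fun ω => |X ω| ^ p * rlog |X ω|) ↔
      Summable fun k : ℕ × ℕ => ∫ ω,
        (2 : ℝ) ^ ((((k.1 + 1) + (k.2 + 1) : ℕ) : ℝ) * (α * (p - q))) *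
          if |X ω| ≤ (2 : ℝ) ^ ((((k.1 + 1) + (k.2 + 1) : ℕ) : ℝ) * α) then |X ω| ^ q else 0 := by
  have hq : 0 < q := hp.trans hpq
  have hsum : ∀ y : ℝ, 0 ≤ y → ∑' k : ℕ × ℕ, ENNReal.ofReal
      ((2 : ℝ) ^ ((((k.1 + 1) + (k.2 + 1) : ℕ) : ℝ) * (α * (p - q))) *
          if y ≤ (2 : ℝ) ^ ((((k.1 + 1) + (k.2 + 1) : ℕ) : ℝ) * α) then y ^ q else 0) =
      ENNReal.ofReal (2 ^ (2 * (α * (p - q)))) *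
        ∑' s : ℕ, ((s : ℝ≥0∞) + 1) * truncTerm α (α * (q - p)) q 2 y s := by
    intro y hy
    rw [← tsum_add_eq, ← ENNReal.tsum_mul_left]
    refine tsum_congr fun k => ?_
    rw [truncTerm, show k.1 + 1 + (k.2 + 1) = k.1 + k.2 + 2 by ring]
    split_ifs
    · rw [← ENNReal.ofReal_mul (by positivity),
        ← mul_assoc ((2 : ℝ) ^ (2 * (α * (p - q)))), ← Real.rpow_add (by norm_num)]
      congr 3
      push_cast; ring
    · simp
  refine integrable_iff_of_scale hα hp X hX
    (fun k y => (2 : ℝ) ^ ((((k.1 + 1) + (k.2 + 1) : ℕ) : ℝ) * (α * (p - q))) *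
          if y ≤ (2 : ℝ) ^ ((((k.1 + 1) + (k.2 + 1) : ℕ) : ℝ) * α) then y ^ q else 0) ?_ ?_ ?_ ?_ ?_
  · exact fun k => (Measurable.ite measurableSet_Iic (by fun_prop) measurable_const).const_mul _
  · intro k y _
    split_ifs <;> positivity
  · refine fun k => ⟨(2 : ℝ) ^ ((((k.1 + 1) + (k.2 + 1) : ℕ) : ℝ) * (α * (p - q))) *
      ((2 : ℝ) ^ ((((k.1 + 1) + (k.2 + 1) : ℕ) : ℝ) * α)) ^ q, fun y hy => ?_⟩
    gcongr
    split_ifs with h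
    · gcongr
    · positivity
  · exact const_exists_upper _ ENNReal.ofReal_ne_top (fun y hy => (hsum y hy).le)
      (truncTerm_upper hα hq hpq 2 le_rfl)
  · refine const_exists_lower (ENNReal.ofReal (2 ^ (-(2 * (α * (p - q)))))) ENNReal.ofReal_ne_top
      (fun y hy => ?_) (truncTerm_lower hα hq hpq 2)
    rw [hsum y hy, ← mul_assoc, ← ENNReal.ofReal_mul (by positivity),
      ← Real.rpow_add (by norm_num)]
    simp

lemma integral_ite_const {Ω : Type*} [MeasureSpace Ω] {X : Ω → ℝ} (hX : Measurable X)
    (a w : ℝ) :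
    ∫ ω, (if a < |X ω| then w else 0) = w * (volume {ω | a < |X ω|}).toReal := by
  have hs : MeasurableSet {ω | a < |X ω|} := measurableSet_lt measurable_const hX.abs
  have : (fun ω => if a < |X ω| then w else 0) = Set.indicator {ω | a < |X ω|} fun _ => w := by
    ext ω; simp [Set.indicator]
  rw [this, integral_indicator_const _ hs, smul_eq_mul, mul_comm]
  rfl

/-- Equivalent moment conditions: for `α > 0`, `0 < p < q`, the finiteness of
`E(|X|^p log|X|)` is equivalent to each of four tail/truncated-moment double-series
conditions. -/
theorem moment_equivalences
    {Ω : Type*} [MeasureSpace Ω] [IsProbabilityMeasure (volume : Measure Ω)]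
    (α p q : ℝ) (hα : 0 < α) (hq : 0 < q) (hp : 0 < p) (hpq : p < q)
    (X : Ω → ℝ) (hmeas : Measurable X) :
    ((Integrable fun ω => |X ω| ^ p * rlog |X ω|) ↔
      Summable fun k : ℕ × ℕ =>
        (((k.1 + 1) * (k.2 + 1) : ℕ) : ℝ) ^ (α * p - 1) *
          (volume {ω | (((k.1 + 1) * (k.2 + 1) : ℕ) : ℝ) ^ α < |X ω|}).toReal) ∧
    ((Integrable fun ω => |X ω| ^ p * rlog |X ω|) ↔
      Summable fun k : ℕ × ℕ =>
        (2 : ℝ) ^ ((((k.1 + 1) + (k.2 + 1) : ℕ) : ℝ) * (α * p)) *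
          (volume {ω | (2 : ℝ) ^ ((((k.1 + 1) + (k.2 + 1) : ℕ) : ℝ) * α) < |X ω|}).toReal) ∧
    ((Integrable fun ω => |X ω| ^ p * rlog |X ω|) ↔
      Summable fun k : ℕ × ℕ =>
        (((k.1 + 1) * (k.2 + 1) : ℕ) : ℝ) ^ (α * (p - q) - 1) *
          ∫ ω, (if |X ω| ≤ (((k.1 + 1) * (k.2 + 1) : ℕ) : ℝ) ^ α then |X ω| ^ q else 0)) ∧
    ((Integrable fun ω => |X ω| ^ p * rlog |X ω|) ↔
      Summable fun k : ℕ × ℕ =>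
        (2 : ℝ) ^ ((((k.1 + 1) + (k.2 + 1) : ℕ) : ℝ) * (α * (p - q))) *
          ∫ ω, (if |X ω| ≤ (2 : ℝ) ^ ((((k.1 + 1) + (k.2 + 1) : ℕ) : ℝ) * α) then |X ω| ^ q
            else 0)) := by
  refine ⟨?_, ?_, ?_, ?_⟩
  · simpa only [integral_ite_const hmeas] using integrable_iff_summable_tail_mul hα hp X hmeas
  · simpa only [integral_ite_const hmeas] using integrable_iff_summable_tail_pow hα hp X hmeas
  · simpa only [integral_const_mul] using integrable_iff_summable_trunc_mul hα hp hpq X hmeas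
  · simpa only [integral_const_mul] using integrable_iff_summable_trunc_pow hα hp hpq X hmeas
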